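/- Over a field K of characteristic 0, the Darboux–Jouanolou bound holds: if ω is a polynomial 1-form of degree d on Kⁿ with at least C(d−1+n, n)·C(n,2) + 2 distinct invariant irreducible algebraic hypersurfaces, then ω admits a rational first integral. -/

import Mathlib

open MvPolynomial

noncomputable section

/-- The field of rational functions `K(z₁,…,zₙ)`. -/
abbrev FR (K : Type*) [Field K] (n : ℕ) := FractionRing (MvPolynomial (Fin n) K)

variable {K : Type*} [Field K] {n : ℕ}

/-- Inclusion of polynomials into rational functions. -/
def toFR : MvPolynomial (Fin n) K →+* FR K n := algebraMap _ _

/-- The `i`-th partial derivative of a rational function, computed from a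
representation `f = a / s` by the quotient rule. -/
def pd (i : Fin n) (f : FR K n) : FR K n :=
  let s := IsLocalization.sec (nonZeroDivisors (MvPolynomial (Fin n) K)) f
  (toFR (pderiv i s.1) * toFR (s.2 : MvPolynomial (Fin n) K)
      - toFR s.1 * toFR (pderiv i (s.2 : MvPolynomial (Fin n) K)))
    / (toFR (s.2 : MvPolynomial (Fin n) K)) ^ 2

/-- `df = 0`, i.e. `f` is a differential constant (an element of `K(zᵖ)`). -/
def IsDiffConst (f : FR K n) : Prop := ∀ i, pd i f = 0

/-- The logarithmic differential `dF/F` of a polynomial, as a rational 1-form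
(given by its coefficients). -/
def logd (F : MvPolynomial (Fin n) K) : Fin n → FR K n :=
  fun k => toFR (pderiv k F) / toFR F

/-- A rational 1-form (given by coefficients) is closed. -/
def IsClosed1 (η : Fin n → FR K n) : Prop :=
  ∀ k l, pd k (η l) = pd l (η k)

/-- The wedge product of two rational 1-forms, as a rational 2-form given by its
coefficient at `dz_k ∧ dz_l`. -/
def wedge (ω η : Fin n → FR K n) : Fin n → Fin n → FR K n :=
  fun k l => ω k * η l - ω l * η k

/-- An irreducible polynomial `F` is invariant for the polynomial 1-form `ω`
if `F` divides (each coefficient of) `ω ∧ dF`. -/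
def Invariant (ω : Fin n → MvPolynomial (Fin n) K) (F : MvPolynomial (Fin n) K) : Prop :=
  ∀ k l, F ∣ (ω k * pderiv l F - ω l * pderiv k F)

/-- The cofactor `Θ_F = ω ∧ dF / F` of an invariant polynomial, as a rational 2-form. -/
def cofactor (ω : Fin n → MvPolynomial (Fin n) K) (F : MvPolynomial (Fin n) K) :
    Fin n → Fin n → FR K n :=
  fun k l => (toFR (ω k) * toFR (pderiv l F) - toFR (ω l) * toFR (pderiv k F)) / toFR F

section Polynomials

theorem totalDegree_pderiv_le (i : Fin n) (F : MvPolynomial (Fin n) K) :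
    (pderiv i F).totalDegree ≤ F.totalDegree - 1 := by
  refine Finset.sup_le fun s hs => ?_
  rw [mem_support_iff, coeff_pderiv] at hs
  have h := le_totalDegree (mem_support_iff.mpr (left_ne_zero_of_mul hs))
  rw [Finsupp.sum_add_index' (by simp) (by simp), Finsupp.sum_single_index rfl] at h
  omega

theorem pderiv_comm (k l : Fin n) (F : MvPolynomial (Fin n) K) :
    pderiv k (pderiv l F) = pderiv l (pderiv k F) := by
  ext s
  rcases eq_or_ne k l with rfl | h
  · rfl
  · simp only [coeff_pderiv, add_right_comm s (Finsupp.single k 1), Finsupp.add_apply,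
      Finsupp.single_eq_of_ne h, Finsupp.single_eq_of_ne h.symm, add_zero]
    exact mul_right_comm _ _ _

theorem pderiv_eq_zero_of_dvd {i : Fin n} {F : MvPolynomial (Fin n) K}
    (h : F ∣ pderiv i F) : pderiv i F = 0 := by
  by_contra h0
  have hF : F ≠ 0 := by
    rintro rfl
    simp at h0
  obtain ⟨Q, hQ⟩ := h
  have hQ0 : Q ≠ 0 := by
    rintro rfl
    simp [hQ] at h0
  have h1 := totalDegree_pderiv_le i F
  rw [hQ, totalDegree_mul_of_isDomain hF hQ0] at h1
  have h2 : F.totalDegree = 0 := by omega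
  rw [totalDegree_eq_zero_iff_eq_C] at h2
  exact h0 (by rw [h2, pderiv_C])

theorem eq_C_of_pderiv_eq_zero [CharZero K] {F : MvPolynomial (Fin n) K}
    (h : ∀ i, pderiv i F = 0) : F = C (coeff 0 F) := by
  ext s
  rw [coeff_C]
  split_ifs with hs
  · rw [hs]
  · obtain ⟨i, hi⟩ : ∃ i, s i ≠ 0 := by
      by_contra! hc
      exact hs (Finsupp.ext fun i => (hc i).symm)
    have h1 := congrArg (coeff (s - Finsupp.single i 1)) (h i)
    rw [coeff_pderiv, Finsupp.sub_add_single_one_cancel hi, coeff_zero] at h1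
    exact (mul_eq_zero.mp h1).resolve_right (Nat.cast_add_one_ne_zero _)

theorem not_isUnit_iff_totalDegree_pos {F : MvPolynomial (Fin n) K} (hF : F ≠ 0) :
    ¬ IsUnit F ↔ 0 < F.totalDegree := by
  rw [Nat.pos_iff_ne_zero, not_iff_not, totalDegree_eq_zero_iff_eq_C]
  refine ⟨fun h => ?_, fun h => ?_⟩
  · exact totalDegree_eq_zero_iff_eq_C.mp ((isUnit_iff_totalDegree_of_isReduced.mp h).2)
  · rw [h, isUnit_map_iff, isUnit_iff_ne_zero]
    rintro h0
    exact hF (by rw [h, h0, C_0])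

/-- An irreducible polynomial over a field of characteristic `0` does not divide all its partial
derivatives. -/
theorem exists_not_dvd_pderiv [CharZero K] {F : MvPolynomial (Fin n) K} (hF : Irreducible F) :
    ∃ i, ¬ F ∣ pderiv i F := by
  by_contra! h
  have h1 := eq_C_of_pderiv_eq_zero fun i => pderiv_eq_zero_of_dvd (h i)
  refine ((not_isUnit_iff_totalDegree_pos hF.ne_zero).mp hF.not_isUnit).ne' ?_
  rw [h1, totalDegree_C]

/-- Quotients `(ω ∧ dF) / F` lower the degree of `ω` by one. -/
theorem totalDegree_cofactor_le {d : ℕ} {ω : Fin n → MvPolynomial (Fin n) K}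
    (hdeg : ∀ i, (ω i).totalDegree ≤ d) {F Q : MvPolynomial (Fin n) K} (hF : Irreducible F)
    {k l : Fin n} (hQ : ω k * pderiv l F - ω l * pderiv k F = F * Q) :
    Q.totalDegree ≤ d - 1 := by
  rcases eq_or_ne Q 0 with rfl | hQ0
  · simp
  have hpos := (not_isUnit_iff_totalDegree_pos hF.ne_zero).mp hF.not_isUnit
  have h1 := totalDegree_sub (ω k * pderiv l F) (ω l * pderiv k F)
  rw [hQ, totalDegree_mul_of_isDomain hF.ne_zero hQ0] at h1
  have h2 := totalDegree_mul (ω k) (pderiv l F)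
  have h3 := totalDegree_mul (ω l) (pderiv k F)
  have h4 := totalDegree_pderiv_le l F
  have h5 := totalDegree_pderiv_le k F
  have h6 := hdeg k
  have h7 := hdeg l
  rcases le_max_iff.mp h1 with h | h <;> omega

/-- The exponent vector attached to a multiset of size `D` in the variables and one extra symbol. -/
def symExponent {D : ℕ} (t : Sym (Option (Fin n)) D) : Fin n →₀ ℕ :=
  Finsupp.equivFunOnFinite.symm fun i => Multiset.count (some i) (t : Multiset (Option (Fin n)))

theorem exists_symExponent_eq {D : ℕ} (s : Fin n →₀ ℕ) (hs : (s.sum fun _ e => e) ≤ D) :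
    ∃ t : Sym (Option (Fin n)) D, symExponent t = s := by
  have hc := Finsupp.card_toMultiset s
  refine ⟨⟨s.toMultiset.map some + Multiset.replicate (D - s.sum fun _ e => e) none, ?_⟩, ?_⟩
  · rw [Multiset.card_add, Multiset.card_map, Multiset.card_replicate, hc]
    exact Nat.add_sub_cancel' hs
  · ext i
    simp [symExponent, Multiset.count_map_eq_count' _ _ (Option.some_injective _),
      Multiset.count_replicate]

theorem eq_zero_of_coeff_symExponent_eq_zero {D : ℕ} {Q : MvPolynomial (Fin n) K}
    (hQ : Q.totalDegree ≤ D) (h : ∀ t : Sym (Option (Fin n)) D, coeff (symExponent t) Q = 0) :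
    Q = 0 := by
  ext s
  by_contra hs
  obtain ⟨t, rfl⟩ := exists_symExponent_eq s
    ((le_totalDegree (mem_support_iff.mpr hs)).trans hQ)
  exact hs (h t)

theorem card_sym_option_fin (n D : ℕ) :
    Fintype.card (Sym (Option (Fin n)) D) = (D + n).choose n := by
  rw [Sym.card_sym_eq_choose, Fintype.card_option, Fintype.card_fin]
  have : n + 1 + D - 1 = D + n := by omega
  rw [this, Nat.choose_symm_add]

/-- Families of antisymmetric arrays of polynomials of degree at most `D`, with at least two more
members than the dimension of the space of such arrays, have two independent relations. -/
theorem exists_two_relations {D m : ℕ} (hm : m = Nat.choose (D + n) n * Nat.choose n 2 + 2)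
    (Q : Fin m → Fin n → Fin n → MvPolynomial (Fin n) K)
    (hanti : ∀ i k l, Q i k l = - Q i l k) (hdiag : ∀ i k, Q i k k = 0)
    (hdeg : ∀ i k l, (Q i k l).totalDegree ≤ D) :
    ∃ c : Fin 2 → Fin m → K, LinearIndependent K c ∧
      ∀ a k l, ∑ i, C (c a i) * Q i k l = 0 := by
  let P := {p : Sym2 (Fin n) // ¬ p.IsDiag}
  let L : (Fin m → K) →ₗ[K] (Sym (Option (Fin n)) D × P → K) :=
    LinearMap.pi fun x => ∑ i, (coeff (symExponent x.1)
      (Q i (Quot.out x.2.1).1 (Quot.out x.2.1).2)) • LinearMap.proj i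
  have hrank := L.finrank_range_add_finrank_ker
  have hle := Submodule.finrank_le (LinearMap.range L)
  rw [Module.finrank_fintype_fun_eq_card, Fintype.card_prod, card_sym_option_fin,
    Sym2.card_subtype_not_diag, Fintype.card_fin] at hle
  rw [Module.finrank_fintype_fun_eq_card, Fintype.card_fin] at hrank
  obtain ⟨c, hc⟩ := exists_linearIndependent_of_le_finrank
    (show 2 ≤ Module.finrank K (LinearMap.ker L) by omega)
  refine ⟨fun a => (c a : Fin m → K), hc.map' (LinearMap.ker L).subtype
    (Submodule.ker_subtype _), fun a => ?_⟩
  have key : ∀ p : P, ∑ i, C ((c a : Fin m → K) i) *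
      Q i (Quot.out p.1).1 (Quot.out p.1).2 = 0 := by
    intro p
    refine eq_zero_of_coeff_symExponent_eq_zero (D := D) ?_ fun t => ?_
    · refine (totalDegree_finsetSum _ _).trans (Finset.sup_le fun i _ => ?_)
      refine (totalDegree_mul _ _).trans ?_
      rw [totalDegree_C, zero_add]
      exact hdeg _ _ _
    · have h := congrFun (LinearMap.mem_ker.mp (c a).2) (t, p)
      simp only [L, LinearMap.pi_apply, LinearMap.sum_apply, LinearMap.smul_apply,
        LinearMap.proj_apply, smul_eq_mul, Pi.zero_apply] at h
      simp only [coeff_sum, coeff_C_mul]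
      rw [← h]
      exact Finset.sum_congr rfl fun i _ => mul_comm _ _
  intro k l
  rcases eq_or_ne k l with rfl | hkl
  · simp [hdiag]
  have h := key ⟨s(k, l), by simpa using hkl⟩
  have hout : s((Quot.out s(k, l)).1, (Quot.out s(k, l)).2) = s(k, l) := Quot.out_eq _
  rcases Sym2.eq_iff.mp hout with ⟨h1, h2⟩ | ⟨h1, h2⟩
  · simpa only [h1, h2] using h
  · simp only [h1, h2] at h
    simp only [hanti _ k l, mul_neg, Finset.sum_neg_distrib, h, neg_zero]

end Polynomials

section RationalFunctions

theorem toFR_injective : Function.Injective (toFR : MvPolynomial (Fin n) K →+* FR K n) :=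
  IsFractionRing.injective _ _

theorem toFR_ne_zero {a : MvPolynomial (Fin n) K} (ha : a ≠ 0) : toFR a ≠ 0 :=
  (map_ne_zero_iff _ toFR_injective).mpr ha

theorem exists_eq_div (f : FR K n) :
    ∃ a b : MvPolynomial (Fin n) K, b ≠ 0 ∧ f = toFR a / toFR b := by
  obtain ⟨a, b, hb, h⟩ := IsFractionRing.div_surjective (A := MvPolynomial (Fin n) K) f
  exact ⟨a, b, nonZeroDivisors.ne_zero hb, h.symm⟩

/-- The quotient rule holds for every representation of a rational function as a fraction. -/
theorem pd_div (i : Fin n) (a : MvPolynomial (Fin n) K) {b : MvPolynomial (Fin n) K}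
    (hb : b ≠ 0) :
    pd i (toFR a / toFR b) =
      (toFR (pderiv i a) * toFR b - toFR a * toFR (pderiv i b)) / toFR b ^ 2 := by
  unfold pd
  generalize hs : IsLocalization.sec (nonZeroDivisors (MvPolynomial (Fin n) K))
    (toFR a / toFR b) = s
  have hs2 : toFR (s.2 : MvPolynomial (Fin n) K) ≠ 0 :=
    toFR_ne_zero (nonZeroDivisors.ne_zero s.2.2)
  have hb' := toFR_ne_zero hb
  have h1 := IsLocalization.sec_spec (M := nonZeroDivisors (MvPolynomial (Fin n) K))
    (toFR a / toFR b)
  rw [hs] at h1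
  have h1 : toFR a / toFR b * toFR (s.2 : MvPolynomial (Fin n) K) = toFR s.1 := h1
  have h2 : a * (s.2 : MvPolynomial (Fin n) K) = s.1 * b := by
    apply toFR_injective
    rw [map_mul, map_mul, ← h1]
    field_simp
  have h3 := congrArg (fun p => toFR (pderiv i p)) h2
  simp only [pderiv_mul, map_mul, map_add] at h3
  have h4 := congrArg toFR h2
  rw [map_mul, map_mul] at h4
  rw [div_eq_div_iff (pow_ne_zero 2 hs2) (pow_ne_zero 2 hb')]
  linear_combination (-(toFR (s.2 : MvPolynomial (Fin n) K) * toFR b)) * h3 +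
    (toFR (pderiv i b) * toFR (s.2 : MvPolynomial (Fin n) K) +
      toFR (pderiv i (s.2 : MvPolynomial (Fin n) K)) * toFR b) * h4

theorem pd_toFR (i : Fin n) (a : MvPolynomial (Fin n) K) : pd i (toFR a) = toFR (pderiv i a) := by
  have h := pd_div i a one_ne_zero
  simpa using h

theorem pd_add (i : Fin n) (f g : FR K n) : pd i (f + g) = pd i f + pd i g := by
  obtain ⟨a, b, hb, rfl⟩ := exists_eq_div f
  obtain ⟨p, q, hq, rfl⟩ := exists_eq_div g
  have hb' := toFR_ne_zero hb
  have hq' := toFR_ne_zero hq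
  have h : toFR a / toFR b + toFR p / toFR q = toFR (a * q + b * p) / toFR (b * q) := by
    simp only [map_mul, map_add]
    field_simp
  rw [h, pd_div i _ (mul_ne_zero hb hq), pd_div i a hb, pd_div i p hq]
  simp only [map_mul, map_add, pderiv_mul]
  field_simp
  ring

theorem pd_mul (i : Fin n) (f g : FR K n) : pd i (f * g) = pd i f * g + f * pd i g := by
  obtain ⟨a, b, hb, rfl⟩ := exists_eq_div f
  obtain ⟨p, q, hq, rfl⟩ := exists_eq_div g
  have hb' := toFR_ne_zero hb
  have hq' := toFR_ne_zero hq
  have h : toFR a / toFR b * (toFR p / toFR q) = toFR (a * p) / toFR (b * q) := by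
    simp only [map_mul]
    field_simp
  rw [h, pd_div i _ (mul_ne_zero hb hq), pd_div i a hb, pd_div i p hq]
  simp only [map_mul, map_add, pderiv_mul]
  field_simp
  ring

theorem pd_toFR_C (i : Fin n) (c : K) : pd i (toFR (C c)) = 0 := by
  rw [pd_toFR, pderiv_C, map_zero]

theorem pd_sum {ι : Type*} (s : Finset ι) (i : Fin n) (f : ι → FR K n) :
    pd i (∑ j ∈ s, f j) = ∑ j ∈ s, pd i (f j) :=
  map_sum (AddMonoidHom.mk' (pd i) (pd_add i)) f s

/-- In characteristic `0`, the only differential constants are the scalars. -/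
theorem IsDiffConst.exists_eq_C [CharZero K] {f : FR K n} (hf : IsDiffConst f) :
    ∃ c : K, f = toFR (C c) := by
  obtain ⟨a, b, hrel, hfab⟩ := IsFractionRing.exists_reduced_fraction
    (A := MvPolynomial (Fin n) K) f
  have hb : (b : MvPolynomial (Fin n) K) ≠ 0 := nonZeroDivisors.ne_zero b.2
  have hb' := toFR_ne_zero hb
  have hab : f = toFR a / toFR (b : MvPolynomial (Fin n) K) := by
    rw [← hfab, IsFractionRing.mk'_eq_div]
    rfl
  have hw : ∀ i, pderiv i a * b = a * pderiv i (b : MvPolynomial (Fin n) K) := by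
    intro i
    have h := hf i
    rw [hab, pd_div i a hb, div_eq_zero_iff, or_iff_left (pow_ne_zero 2 hb'), sub_eq_zero,
      ← map_mul, ← map_mul] at h
    exact toFR_injective h
  have hb0 : ∀ i, pderiv i (b : MvPolynomial (Fin n) K) = 0 := fun i =>
    pderiv_eq_zero_of_dvd (hrel.symm.dvd_of_dvd_mul_left ⟨pderiv i a, by rw [← hw, mul_comm]⟩)
  have ha0 : ∀ i, pderiv i a = 0 := by
    intro i
    have h := hw i
    rw [hb0 i, mul_zero] at h
    exact (mul_eq_zero.mp h).resolve_right hb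
  have hac := eq_C_of_pderiv_eq_zero ha0
  have hbc := eq_C_of_pderiv_eq_zero hb0
  have hbne : coeff 0 (b : MvPolynomial (Fin n) K) ≠ 0 := fun h => hb (by rw [hbc, h, C_0])
  refine ⟨coeff 0 a / coeff 0 (b : MvPolynomial (Fin n) K), ?_⟩
  rw [hab, div_eq_iff hb']
  conv_lhs => rw [hac]
  conv_rhs => rw [hbc]
  rw [← map_mul, ← C_mul, coeff_C, if_pos rfl, div_mul_cancel₀ _ hbne]

theorem isClosed1_logd {F : MvPolynomial (Fin n) K} (hF : F ≠ 0) : IsClosed1 (logd F) := by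
  intro k l
  simp only [logd]
  rw [pd_div _ _ hF, pd_div _ _ hF, pderiv_comm k l]
  ring

theorem isClosed1_sum_logd {ι : Type*} [Fintype ι] {F : ι → MvPolynomial (Fin n) K}
    (hF : ∀ i, F i ≠ 0) (c : ι → K) :
    IsClosed1 fun k => ∑ i, toFR (C (c i)) * logd (F i) k := by
  intro k l
  simp only [pd_sum, pd_mul, pd_toFR_C, zero_mul, zero_add, isClosed1_logd (hF _) k l]

/-- Logarithmic differentials of pairwise non-associate irreducible polynomials are linearly
independent over the base field, in characteristic `0`. -/
theorem eq_zero_of_sum_logd_eq_zero [CharZero K] {ι : Type*} [Fintype ι]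
    {F : ι → MvPolynomial (Fin n) K} (hirr : ∀ i, Irreducible (F i))
    (hdist : ∀ i j, i ≠ j → ¬ Associated (F i) (F j)) {c : ι → K}
    (h : ∀ k, ∑ i, toFR (C (c i)) * logd (F i) k = 0) : c = 0 := by
  classical
  funext j
  by_contra hj
  obtain ⟨k, hk⟩ := exists_not_dvd_pderiv (hirr j)
  have hprod : ∑ i, C (c i) * pderiv k (F i) * ∏ l ∈ Finset.univ.erase i, F l = 0 := by
    apply toFR_injective
    rw [map_sum, map_zero, ← mul_zero (toFR (∏ l, F l)), ← h k, Finset.mul_sum]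
    refine Finset.sum_congr rfl fun i _ => ?_
    have hi := toFR_ne_zero (hirr i).ne_zero
    rw [← Finset.mul_prod_erase Finset.univ F (Finset.mem_univ i)]
    simp only [map_mul, logd]
    field_simp
  have hdvd : F j ∣ C (c j) * pderiv k (F j) * ∏ l ∈ Finset.univ.erase j, F l := by
    rw [← Finset.add_sum_erase _ _ (Finset.mem_univ j), add_eq_zero_iff_eq_neg] at hprod
    rw [hprod, dvd_neg]
    refine Finset.dvd_sum fun i hi => Dvd.dvd.mul_left (Finset.dvd_prod_of_mem F ?_) _
    exact Finset.mem_erase.mpr ⟨(Finset.ne_of_mem_erase hi).symm, Finset.mem_univ j⟩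
  have hp := (hirr j).prime
  rcases hp.dvd_or_dvd hdvd with h1 | h1
  · rcases hp.dvd_or_dvd h1 with h2 | h2
    · exact hp.not_isUnit (isUnit_of_dvd_unit h2 ((isUnit_iff_ne_zero.mpr hj).map C))
    · exact hk h2
  · obtain ⟨i, hi, h2⟩ := (hp.dvd_finsetProd_iff F).mp h1
    exact hdist j i (Finset.ne_of_mem_erase hi).symm
      ((hirr j).associated_of_dvd (hirr i) h2)

/-- The ratio of two closed forms proportional to `ω` is constant along `ω`. -/
theorem wedge_pd_div_eq_zero {ω η θ : Fin n → FR K n} {a : Fin n} (hη : IsClosed1 η)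
    (hθ : IsClosed1 θ) (hωη : ∀ k l, wedge ω η k l = 0) (hωθ : ∀ k l, wedge ω θ k l = 0)
    (ha : ω a ≠ 0) (hηa : η a ≠ 0) (k l : Fin n) :
    wedge ω (fun k => pd k (θ a / η a)) k l = 0 := by
  set h := θ a / η a with hh
  have hprop : θ = fun k => h * η k := by
    funext k
    have h1 := hωη a k
    have h2 := hωθ a k
    simp only [wedge] at h1 h2
    rw [hh, div_mul_eq_mul_div, eq_div_iff hηa]
    apply mul_left_cancel₀ ha
    linear_combination η a * h2 - θ a * h1
  have h1 := hθ k l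
  have h2 := hη k l
  simp only [hprop, pd_mul] at h1
  have h3 := hωη a k
  have h4 := hωη a l
  simp only [wedge] at h3 h4 ⊢
  apply mul_left_cancel₀ hηa
  linear_combination (pd k h) * h4 - (pd l h) * h3 - ω a * h1 + ω a * h * h2

end RationalFunctions

/-- (Darboux–Jouanolou, characteristic `0`.) A polynomial 1-form of
degree `d` on `Kⁿ`, over a field of characteristic `0`, with at least
`C(d-1+n,n)·C(n,2) + 2` pairwise non-associate invariant irreducible polynomials,
admits a rational first integral. -/
theorem stmt18 {K : Type*} [Field K] [CharZero K] {n d m : ℕ}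
    (hm : m = Nat.choose (d - 1 + n) n * Nat.choose n 2 + 2)
    (ω : Fin n → MvPolynomial (Fin n) K)
    (hdeg : ∀ i, (ω i).totalDegree ≤ d)
    (F : Fin m → MvPolynomial (Fin n) K)
    (hirr : ∀ i, Irreducible (F i))
    (hdist : ∀ i j, i ≠ j → ¬ Associated (F i) (F j))
    (hinv : ∀ i, Invariant ω (F i)) :
    ∃ f : FR K n, (∃ k, pd k f ≠ 0) ∧
      ∀ k l, wedge (fun k => toFR (ω k)) (fun k => pd k f) k l = 0 := by
  obtain ⟨x⟩ : Nonempty (Fin n) := by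
    obtain ⟨i, -⟩ := exists_not_dvd_pderiv (hirr ⟨0, by omega⟩)
    exact ⟨i⟩
  by_cases hω : ∀ k, ω k = 0
  · refine ⟨toFR (X x), ⟨x, ?_⟩, fun k l => ?_⟩
    · rw [pd_toFR, pderiv_X_self, map_one]
      exact one_ne_zero
    · simp [wedge, hω]
  obtain ⟨a, ha⟩ := not_forall.mp hω
  have hF0 := fun i => (hirr i).ne_zero
  choose Q hQ using hinv
  obtain ⟨c, hc, hrel⟩ := exists_two_relations (D := d - 1) hm Q
    (fun i k l => mul_left_cancel₀ (hF0 i) (by rw [mul_neg, ← hQ, ← hQ]; ring))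
    (fun i k => mul_left_cancel₀ (hF0 i) (by rw [← hQ]; ring))
    (fun i k l => totalDegree_cofactor_le hdeg (hirr i) (hQ i k l))
  let η : Fin 2 → Fin n → FR K n := fun b k => ∑ i, toFR (C (c b i)) * logd (F i) k
  have hclosed : ∀ b, IsClosed1 (η b) := fun b => isClosed1_sum_logd hF0 (c b)
  have hwedge : ∀ b k l, wedge (fun k => toFR (ω k)) (η b) k l = 0 := by
    intro b k l
    have h := congrArg toFR (hrel b k l)
    rw [map_sum, map_zero] at h
    simp only [wedge, η, Finset.mul_sum, ← Finset.sum_sub_distrib]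
    rw [← h]
    refine Finset.sum_congr rfl fun i _ => ?_
    have hi := toFR_ne_zero (hF0 i)
    have h1 := congrArg toFR (hQ i k l)
    simp only [map_sub, map_mul] at h1
    simp only [map_mul, logd]
    field_simp
    linear_combination toFR (C (c b i)) * h1
  have ha' := toFR_ne_zero ha
  have hηa : η 0 a ≠ 0 := by
    intro h0
    refine hc.ne_zero 0 (eq_zero_of_sum_logd_eq_zero hirr hdist fun k => ?_)
    have h := hwedge 0 a k
    simp only [wedge, h0, mul_zero, sub_zero] at h
    exact (mul_eq_zero.mp h).resolve_left ha'
  refine ⟨η 1 a / η 0 a, ?_,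
    wedge_pd_div_eq_zero (hclosed 0) (hclosed 1) (hwedge 0) (hwedge 1) ha' hηa⟩
  by_contra! hconst
  obtain ⟨r, hr⟩ := IsDiffConst.exists_eq_C hconst
  rw [div_eq_iff hηa] at hr
  have hzero : c 1 - r • c 0 = 0 := by
    refine eq_zero_of_sum_logd_eq_zero hirr hdist fun k => ?_
    have h0 := hwedge 0 a k
    have h1 := hwedge 1 a k
    have h2 : ∑ i, toFR (C ((c 1 - r • c 0) i)) * logd (F i) k =
        η 1 k - toFR (C r) * η 0 k := by
      simp only [η, Finset.mul_sum, ← Finset.sum_sub_distrib]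
      refine Finset.sum_congr rfl fun i _ => ?_
      simp only [Pi.sub_apply, Pi.smul_apply, smul_eq_mul, map_sub, map_mul]
      ring
    simp only [wedge] at h0 h1
    rw [h2]
    apply mul_left_cancel₀ ha'
    linear_combination h1 - toFR (C r) * h0 + toFR (ω k) * hr
  have := LinearIndependent.pair_iff.mp
    (show LinearIndependent K ![c 0, c 1] by convert hc using 1; ext i; fin_cases i <;> rfl)
    (-r) 1 (by rw [← hzero]; simp only [neg_smul, one_smul]; abel)
  exact one_ne_zero this.2
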